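/- Let (U,ρ) be a complete metric space and let p ≥ 1. Then W(ℝ,U) ∩ M*_p(ℝ,U) ⊆ W̃(ℝ,U) ∩ M*_p(ℝ,U) ⊆ W̃_p(ℝ,U); in particular, W_p(ℝ,U) ⊆ W̃_p(ℝ,U). -/

import Mathlib

open MeasureTheory Filter Topology TopologicalSpace
open scoped ENNReal Pointwise

noncomputable section

/-- The truncated ("bounded") distance `ρ'(x,y) = min {1, ρ(x,y)}` on a metric space. -/
def bdist {α : Type*} [PseudoMetricSpace α] : α → α → ℝ := fun x y => min 1 (dist x y)

/-- The Hausdorff distance `dist_{ρ'}` (corresponding to the truncated metric `ρ'`)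
between non-empty closed subsets of a metric space. -/
def clDist {α : Type*} [MetricSpace α] : Closeds α → Closeds α → ℝ :=
  fun A B => (min 1 (EMetric.hausdorffEdist (A : Set α) (B : Set α))).toReal

/-- The Hausdorff distance `dist_ρ` between (non-empty closed bounded) subsets. -/
def clbDist {α : Type*} [MetricSpace α] : Closeds α → Closeds α → ℝ :=
  fun A B => Metric.hausdorffDist (A : Set α) (B : Set α)

/-- `D^{(d)}_{p,l}(f,g) = ( sup_ξ (1/l) ∫_ξ^{ξ+l} d(f t, g t)^p dt )^{1/p}`,
valued in `ℝ≥0∞`. -/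
def weylD {α : Type*} (d : α → α → ℝ) (p l : ℝ) (f g : ℝ → α) : ℝ≥0∞ :=
  (⨆ ξ : ℝ, ENNReal.ofReal (1 / l) *
      ∫⁻ t in Set.Icc ξ (ξ + l), ENNReal.ofReal (d (f t) (g t) ^ p)) ^ (1 / p)

/-- The Weyl semimetric `D^{(d)}_p(f,g) = lim_{l → +∞} D^{(d)}_{p,l}(f,g)`
(the limit exists; it is formalized here as a `limsup`). -/
def weylDinf {α : Type*} (d : α → α → ℝ) (p : ℝ) (f g : ℝ → α) : ℝ≥0∞ :=
  Filter.limsup (fun l => weylD d p l f g) Filter.atTop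

/-- Membership in `M_p(ℝ, α)`: `f` is (strongly) measurable and
`sup_ξ ∫_ξ^{ξ+1} d(f t, x₀)^p dt < +∞`. -/
def MemMp {α : Type*} [TopologicalSpace α] (d : α → α → ℝ) (p : ℝ) (x₀ : α)
    (f : ℝ → α) : Prop :=
  AEStronglyMeasurable f MeasureTheory.volume ∧
  ∃ C : ℝ, ∀ ξ : ℝ,
    (∫⁻ t in Set.Icc ξ (ξ + 1), ENNReal.ofReal (d (f t) x₀ ^ p)) ≤ ENNReal.ofReal C

/-- A set `T ⊆ ℝ` is relatively dense. -/
def RelDense (T : Set ℝ) : Prop := ∃ a > 0, ∀ ξ : ℝ, (Set.Icc ξ (ξ + a) ∩ T).Nonempty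

/-- The set of `(ε, D^{(d)}_{p,l})`-almost periods of `f`. -/
def APeriodsL {α : Type*} (d : α → α → ℝ) (p l ε : ℝ) (f : ℝ → α) : Set ℝ :=
  {τ | weylD d p l f (fun t => f (t + τ)) < ENNReal.ofReal ε}

/-- The set `P^{(d)}_p(ε; f)` of `(ε, D^{(d)}_p)`-almost periods of `f`. -/
def APeriods {α : Type*} (d : α → α → ℝ) (p ε : ℝ) (f : ℝ → α) : Set ℝ :=
  {τ | weylDinf d p f (fun t => f (t + τ)) < ENNReal.ofReal ε}

/-- Membership in the space `W_p(ℝ, α)` of Weyl almost periodic functions of order `p`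
w.r.t. the distance `d` (with distinguished point `x₀`). -/
def MemWp {α : Type*} [TopologicalSpace α] (d : α → α → ℝ) (p : ℝ) (x₀ : α)
    (f : ℝ → α) : Prop :=
  MemMp d p x₀ f ∧ ∀ ε > 0, ∃ l > 0, RelDense (APeriodsL d p l ε f)

/-- The module `Mod f`: the additive group of all `λ ∈ ℝ` such that `e^{iλτ_j} → 1`
for every `f`-returning sequence `{τ_j}` (a sequence with `D^{(d)}_1(f, f(·+τ_j)) → 0`,
where `d` is the relevant bounded distance). -/
def WMod {α : Type*} (d : α → α → ℝ) (f : ℝ → α) : Set ℝ :=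
  {lam : ℝ | ∀ τ : ℕ → ℝ,
    Tendsto (fun j => weylDinf d 1 f (fun t => f (t + τ j))) atTop (nhds 0) →
    Tendsto (fun j => Complex.exp (Complex.I * ((lam * τ j : ℝ) : ℂ))) atTop (nhds 1)}

/-- `κ_W(T) = lim_{l → +∞} sup_ξ (1/l) meas([ξ, ξ+l] ∩ T)` (formalized as a `limsup`). -/
def kappaW (T : Set ℝ) : ℝ≥0∞ :=
  Filter.limsup (fun l : ℝ => ⨆ ξ : ℝ,
    ENNReal.ofReal (1 / l) * MeasureTheory.volume (Set.Icc ξ (ξ + l) ∩ T)) Filter.atTop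

/-- Membership in `M*_p(ℝ, α)`. -/
def MemMpStar {α : Type*} [TopologicalSpace α] (d : α → α → ℝ) (p : ℝ) (x₀ : α)
    (f : ℝ → α) : Prop :=
  MemMp d p x₀ f ∧
  ∀ ε > 0, ∃ δ > 0, ∀ T : Set ℝ, MeasurableSet T → kappaW T < ENNReal.ofReal δ →
    Filter.limsup (fun l : ℝ => ⨆ ξ : ℝ, ENNReal.ofReal (1 / l) *
        ∫⁻ t in Set.Icc ξ (ξ + l) ∩ T, ENNReal.ofReal (d (f t) x₀ ^ p)) Filter.atTop
      < ENNReal.ofReal ε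

/-- Distance from a point to a set w.r.t. the distance `d`, valued in `ℝ≥0∞`
(`∞` for the empty set). -/
def dInfDist {α : Type*} (d : α → α → ℝ) (x : α) (K : Set α) : ℝ≥0∞ :=
  ⨅ y ∈ K, ENNReal.ofReal (d x y)

/-- Membership in `W̃_p(ℝ, α)`: conditions 1) (relatively dense sets of
`(ε, D^{(d)}_p)`-almost periods) and 2) (approximate compactness of values). -/
def MemWpTilde {α : Type*} [TopologicalSpace α] (d : α → α → ℝ) (p : ℝ) (x₀ : α)
    (f : ℝ → α) : Prop :=
  MemMp d p x₀ f ∧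
  (∀ ε > 0, RelDense (APeriods d p ε f)) ∧
  (∀ ε > 0, ∀ δ > 0, ∃ K : Set α, IsCompact K ∧
      kappaW {t | ENNReal.ofReal ε ≤ dInfDist d (f t) K} < ENNReal.ofReal δ)

/-- The support of a Borel measure on a topological space. -/
def measSupport {α : Type*} [TopologicalSpace α] [MeasurableSpace α]
    (μ : Measure α) : Set α :=
  {x | ∀ V : Set α, IsOpen V → x ∈ V → 0 < μ V}

/-- `r_δ(x, μ) = inf { r > 0 : μ[U_r(x)] > δ }`. -/
def rdelta {α : Type*} [PseudoMetricSpace α] [MeasurableSpace α]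
    (x : α) (μ : Measure α) (δ : ℝ) : ℝ :=
  sInf {r : ℝ | 0 < r ∧ ENNReal.ofReal δ < μ (Metric.ball x r)}

/-- The Lévy–Prokhorov distance on Borel probability measures. -/
def lpDist {α : Type*} [MeasurableSpace α] [PseudoEMetricSpace α] :
    ProbabilityMeasure α → ProbabilityMeasure α → ℝ :=
  fun μ ν => MeasureTheory.levyProkhorovDist (μ : Measure α) (ν : Measure α)

end

/-!
An average over a window of length `L` is at most `1 + l / L` times the largest average over windows
of length `l`. Hence the limits defining `D_p` and `κ_W` exist and are bounded by their values at
every `l`, so that almost periods for `D_{p,l}` are almost periods for `D_p`. For functions in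
`W_p`, Chebyshev's inequality turns an almost period into a translation that changes `f` noticeably
only on a small part of every window; approximating `f` by a simple function on one long window then
yields a finite set of values close to most values of `f` on every window.

For the passage from `ρ'` to `ρ`, if `τ` is an almost period for `ρ'`, then `f` and `f (· + τ)` are
close outside a set of small `κ_W`. For `f` in `M*_p` this set contributes little to the averages of
`ρ^p (f, x₀)` and of its translate, and therefore to those of `ρ^p (f, f (· + τ))`.
-/

section WindowMean

/-- The largest average `sup_ξ μ [ξ, ξ + l] / l` of a measure over windows of length `l`. Applied to
a restriction of Lebesgue measure, or to a measure with density `d (f t) (g t) ^ p`, it yields the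
expressions whose limits define `kappaW` and `weylDinf`. -/
noncomputable def windowMean (μ : Measure ℝ) (l : ℝ) : ℝ≥0∞ :=
  ⨆ ξ : ℝ, ENNReal.ofReal (1 / l) * μ (Set.Icc ξ (ξ + l))

/-- The upper mean of a measure on the line, the limit of `windowMean μ l` as `l → +∞`. Like the
quantities it generalizes, it is encoded as a `limsup`; see `tendsto_windowMean`. -/
noncomputable def upperMean (μ : Measure ℝ) : ℝ≥0∞ :=
  limsup (fun l => windowMean μ l) atTop

variable {μ ν : Measure ℝ} {l L : ℝ}

theorem le_windowMean (μ : Measure ℝ) (l ξ : ℝ) :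
    ENNReal.ofReal (1 / l) * μ (Set.Icc ξ (ξ + l)) ≤ windowMean μ l :=
  le_iSup (fun ξ => ENNReal.ofReal (1 / l) * μ (Set.Icc ξ (ξ + l))) ξ

theorem windowMean_mono (h : μ ≤ ν) (l : ℝ) : windowMean μ l ≤ windowMean ν l := by
  unfold windowMean
  gcongr

theorem windowMean_smul (c : ℝ≥0∞) (μ : Measure ℝ) (l : ℝ) :
    windowMean (c • μ) l = c * windowMean μ l := by
  simp only [windowMean, ENNReal.mul_iSup, Measure.smul_apply, smul_eq_mul, mul_left_comm]

theorem windowMean_add_le (μ ν : Measure ℝ) (l : ℝ) :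
    windowMean (μ + ν) l ≤ windowMean μ l + windowMean ν l := by
  refine iSup_le fun ξ => ?_
  rw [Measure.add_apply, mul_add]
  exact add_le_add (le_windowMean μ l ξ) (le_windowMean ν l ξ)

theorem windowMean_map_add_right (μ : Measure ℝ) (τ l : ℝ) :
    windowMean (μ.map (· + τ)) l = windowMean μ l := by
  have preimage_Icc (ξ : ℝ) : (· + τ) ⁻¹' Set.Icc ξ (ξ + l) = Set.Icc (ξ - τ) (ξ - τ + l) := by
    rw [Set.preimage_add_const_Icc, add_sub_right_comm]
  simp only [windowMean, Measure.map_apply (measurable_add_const τ) measurableSet_Icc, preimage_Icc]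
  exact (Equiv.subRight τ).iSup_comp
    (g := fun ξ => ENNReal.ofReal (1 / l) * μ (Set.Icc ξ (ξ + l)))

theorem windowMean_volume (hl : 0 < l) : windowMean volume l = 1 := by
  simp only [windowMean, Real.volume_Icc, add_sub_cancel_left, ciSup_const]
  rw [← ENNReal.ofReal_mul (by positivity), one_div_mul_cancel hl.ne', ENNReal.ofReal_one]

theorem measure_Icc_le_windowMean (μ : Measure ℝ) (hl : 0 < l) (ξ : ℝ) :
    μ (Set.Icc ξ (ξ + l)) ≤ ENNReal.ofReal l * windowMean μ l := by
  calc μ (Set.Icc ξ (ξ + l))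
      = ENNReal.ofReal l * (ENNReal.ofReal (1 / l) * μ (Set.Icc ξ (ξ + l))) := by
        rw [← mul_assoc, ← ENNReal.ofReal_mul hl.le, mul_one_div_cancel hl.ne',
          ENNReal.ofReal_one, one_mul]
    _ ≤ ENNReal.ofReal l * windowMean μ l := by
        gcongr
        exact le_windowMean μ l ξ

theorem measure_Icc_add_nat_mul_le (μ : Measure ℝ) (hl : 0 < l) (ξ : ℝ) (n : ℕ) :
    μ (Set.Icc ξ (ξ + (n + 1) * l)) ≤ (n + 1) * (ENNReal.ofReal l * windowMean μ l) := by
  induction n with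
  | zero => simpa only [Nat.cast_zero, zero_add, one_mul] using measure_Icc_le_windowMean μ hl ξ
  | succ n ih =>
    have endpoint : ξ + ((n + 1 : ℕ) + 1) * l = ξ + (n + 1) * l + l := by push_cast; ring
    rw [endpoint, Nat.cast_succ, add_mul (_ + 1), one_mul]
    exact (measure_mono Set.Icc_subset_Icc_union_Icc).trans <| (measure_union_le _ _).trans <|
      add_le_add ih (measure_Icc_le_windowMean μ hl _)

theorem windowMean_le_mul_windowMean (μ : Measure ℝ) (hl : 0 < l) (hL : 0 < L) :
    windowMean μ L ≤ ENNReal.ofReal (1 + l / L) * windowMean μ l := by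
  refine iSup_le fun ξ => ?_
  set n := ⌊L / l⌋₊
  have floor_le : (n : ℝ) ≤ L / l := Nat.floor_le (by positivity)
  have le_length : L ≤ (n + 1) * l := ((div_lt_iff₀ hl).1 (Nat.lt_floor_add_one _)).le
  calc ENNReal.ofReal (1 / L) * μ (Set.Icc ξ (ξ + L))
      ≤ ENNReal.ofReal (1 / L) * μ (Set.Icc ξ (ξ + (n + 1) * l)) := by gcongr
    _ ≤ ENNReal.ofReal (1 / L) * ((n + 1) * (ENNReal.ofReal l * windowMean μ l)) := by
        gcongr
        exact measure_Icc_add_nat_mul_le μ hl ξ n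
    _ = ENNReal.ofReal (1 / L * ((n + 1) * l)) * windowMean μ l := by
        rw [ENNReal.ofReal_mul (by positivity), ENNReal.ofReal_mul (by positivity),
          ENNReal.ofReal_add (by positivity) one_pos.le, ENNReal.ofReal_natCast,
          ENNReal.ofReal_one]
        ring
    _ ≤ ENNReal.ofReal (1 + l / L) * windowMean μ l := by
        gcongr
        calc 1 / L * ((n + 1) * l) ≤ 1 / L * ((L / l + 1) * l) := by gcongr
          _ = 1 + l / L := by field_simp

theorem upperMean_le_windowMean (μ : Measure ℝ) (hl : 0 < l) :
    upperMean μ ≤ windowMean μ l := by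
  have factor_tendsto : Tendsto (fun L : ℝ => ENNReal.ofReal (1 + l / L)) atTop (𝓝 1) := by
    simpa only [add_zero, ENNReal.ofReal_one] using ENNReal.tendsto_ofReal
      (tendsto_const_nhds.add (tendsto_const_nhds.div_atTop tendsto_id) :
        Tendsto (fun L : ℝ => 1 + l / L) atTop (𝓝 (1 + 0)))
  have bound_tendsto := ENNReal.Tendsto.mul_const (b := windowMean μ l) factor_tendsto
    (.inl one_ne_zero)
  rw [one_mul] at bound_tendsto
  rw [← bound_tendsto.limsup_eq]
  refine limsup_le_limsup ?_
  filter_upwards [eventually_gt_atTop 0] with L hL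
  exact windowMean_le_mul_windowMean μ hl hL

theorem tendsto_windowMean (μ : Measure ℝ) :
    Tendsto (fun l => windowMean μ l) atTop (𝓝 (upperMean μ)) := by
  refine tendsto_of_le_liminf_of_limsup_le (le_liminf_of_le (h := ?_)) le_rfl
  filter_upwards [eventually_gt_atTop 0] with l hl
  exact upperMean_le_windowMean μ hl

theorem upperMean_mono (h : μ ≤ ν) : upperMean μ ≤ upperMean ν :=
  limsup_le_limsup (.of_forall (windowMean_mono h))

theorem upperMean_add_le (μ ν : Measure ℝ) : upperMean (μ + ν) ≤ upperMean μ + upperMean ν :=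
  le_of_tendsto_of_tendsto' (tendsto_windowMean _)
    ((tendsto_windowMean μ).add (tendsto_windowMean ν)) (windowMean_add_le μ ν)

theorem upperMean_smul {c : ℝ≥0∞} (hc : c ≠ ∞) (μ : Measure ℝ) :
    upperMean (c • μ) = c * upperMean μ := by
  simp only [upperMean, windowMean_smul]
  exact ENNReal.limsup_const_mul_of_ne_top hc

theorem upperMean_map_add_right (μ : Measure ℝ) (τ : ℝ) :
    upperMean (μ.map (· + τ)) = upperMean μ := by
  simp only [upperMean, windowMean_map_add_right]

theorem upperMean_restrict_map_add_right (μ : Measure ℝ) (T : Set ℝ) (τ : ℝ) :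
    upperMean ((μ.map (· + τ)).restrict ((· - τ) ⁻¹' T)) = upperMean (μ.restrict T) := by
  have restrict_map : (μ.map (· + τ)).restrict ((· - τ) ⁻¹' T) = (μ.restrict T).map (· + τ) := by
    simpa only [MeasurableEquiv.coe_addRight, Set.preimage_preimage, add_sub_cancel_right,
      Set.preimage_id'] using (MeasurableEquiv.addRight τ).restrict_map μ ((· - τ) ⁻¹' T)
  rw [restrict_map, upperMean_map_add_right]

theorem upperMean_volume : upperMean volume = 1 :=
  tendsto_nhds_unique (tendsto_windowMean volume) <| tendsto_const_nhds.congr' <|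
    (eventually_gt_atTop 0).mono fun _ hl => (windowMean_volume hl).symm

end WindowMean

section KappaW

theorem kappaW_eq_upperMean (T : Set ℝ) : kappaW T = upperMean (volume.restrict T) := by
  simp only [kappaW, upperMean, windowMean, Measure.restrict_apply measurableSet_Icc]

theorem kappaW_mono {S T : Set ℝ} (h : S ⊆ T) : kappaW S ≤ kappaW T := by
  simp only [kappaW_eq_upperMean]
  exact upperMean_mono (Measure.restrict_mono_set _ h)

theorem kappaW_toMeasurable (T : Set ℝ) : kappaW (toMeasurable volume T) = kappaW T := by
  simp only [kappaW_eq_upperMean, Measure.restrict_toMeasurable_of_sFinite]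

theorem kappaW_preimage_sub_right (T : Set ℝ) (τ : ℝ) : kappaW ((· - τ) ⁻¹' T) = kappaW T := by
  simp only [kappaW_eq_upperMean]
  rw [← upperMean_restrict_map_add_right volume T τ, map_add_right_eq_self]

end KappaW

theorem RelDense.mono {S T : Set ℝ} (h : S ⊆ T) (hS : RelDense S) : RelDense T := by
  obtain ⟨a, ha, hS⟩ := hS
  exact ⟨a, ha, fun ξ => (hS ξ).mono (Set.inter_subset_inter_right _ h)⟩

/-- A pseudometric on the points of a topological space `U` whose graph is continuous, the common
setting for the distance of a metric space and its truncation `bdist`. The topology of `U` may be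
finer than the one `d` induces. -/
structure IsContinuousPseudometric {U : Type*} [TopologicalSpace U] (d : U → U → ℝ) : Prop where
  self_eq_zero : ∀ x, d x x = 0
  comm : ∀ x y, d x y = d y x
  triangle : ∀ x y z, d x z ≤ d x y + d y z
  continuous : Continuous (Function.uncurry d)

namespace IsContinuousPseudometric

theorem nonneg {U : Type*} [TopologicalSpace U] {d : U → U → ℝ} (hd : IsContinuousPseudometric d)
    (x y : U) : 0 ≤ d x y := by
  linarith [hd.triangle x y x, hd.self_eq_zero x, hd.comm x y]

theorem aestronglyMeasurable {U : Type*} [TopologicalSpace U] {d : U → U → ℝ}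
    (hd : IsContinuousPseudometric d) {α : Type*} [MeasurableSpace α] {μ : Measure α} {f g : α → U}
    (hf : AEStronglyMeasurable f μ) (hg : AEStronglyMeasurable g μ) :
    AEStronglyMeasurable (fun t => d (f t) (g t)) μ :=
  hd.continuous.comp_aestronglyMeasurable (hf.prodMk hg)

theorem exists_simpleFunc_measure_lt {U : Type*} [TopologicalSpace U] {d : U → U → ℝ}
    (hd : IsContinuousPseudometric d) {α : Type*} [MeasurableSpace α] {μ : Measure α}
    [IsFiniteMeasure μ] {f : α → U} (hf : AEStronglyMeasurable f μ) {c : ℝ} (hc : 0 < c)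
    {δ : ℝ≥0∞} (hδ : 0 < δ) :
    ∃ s : SimpleFunc α U, μ {t | c ≤ d (f t) (s t)} < δ := by
  set s := hf.stronglyMeasurable_mk.approx
  have dist_tendsto : ∀ᵐ t ∂μ, Tendsto (fun n => d (f t) (s n t)) atTop (𝓝 0) := by
    filter_upwards [hf.ae_eq_mk] with t ht
    rw [← hd.self_eq_zero (f t)]
    refine (hd.continuous.tendsto (f t, f t)).comp (tendsto_const_nhds.prodMk_nhds ?_)
    exact ht ▸ hf.stronglyMeasurable_mk.tendsto_approx t
  have in_measure : TendstoInMeasure μ (fun n t => d (f t) (s n t)) atTop 0 :=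
    tendstoInMeasure_of_tendsto_ae
      (fun n => hd.aestronglyMeasurable hf (s n).stronglyMeasurable.aestronglyMeasurable)
      dist_tendsto
  obtain ⟨n, hn⟩ :=
    ((in_measure (.ofReal c) (ENNReal.ofReal_pos.2 hc)).eventually_lt_const hδ).exists
  refine ⟨s n, (measure_mono fun t ht => ?_).trans_lt hn⟩
  change ENNReal.ofReal c ≤ edist (d (f t) (s n t)) 0
  rw [edist_dist, Real.dist_0_eq_abs]
  exact ENNReal.ofReal_le_ofReal (le_trans ht (le_abs_self _))

end IsContinuousPseudometric

section PseudoMetricSpace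

variable {U : Type*} [PseudoMetricSpace U]

theorem isContinuousPseudometric_dist : IsContinuousPseudometric (dist : U → U → ℝ) where
  self_eq_zero := dist_self
  comm := dist_comm
  triangle := dist_triangle
  continuous := continuous_dist

theorem isContinuousPseudometric_bdist : IsContinuousPseudometric (bdist : U → U → ℝ) where
  self_eq_zero x := by simp only [bdist, dist_self, zero_le_one, inf_of_le_right]
  comm x y := by rw [bdist, dist_comm, bdist]
  triangle x y z := by
    have := dist_triangle x y z
    simp only [bdist]
    grind [dist_nonneg (x := x) (y := y), dist_nonneg (x := y) (y := z)]
  continuous := continuous_const.min continuous_dist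

end PseudoMetricSpace

theorem ofReal_le_dInfDist_iff {U : Type*} {d : U → U → ℝ} {ε : ℝ} (hε : 0 < ε) {x : U}
    {K : Set U} : ENNReal.ofReal ε ≤ dInfDist d x K ↔ ∀ y ∈ K, ε ≤ d x y := by
  simp only [dInfDist, le_iInf_iff, ENNReal.ofReal_le_ofReal_iff', hε.not_ge, or_false]

/-- The measure with density `d (f t) (g t) ^ p`; its window means and upper mean are the `p`-th
powers of `weylD d p l f g` and `weylDinf d p f g`. -/
noncomputable def distMeasure {U : Type*} (d : U → U → ℝ) (p : ℝ) (f g : ℝ → U) : Measure ℝ :=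
  volume.withDensity fun t => ENNReal.ofReal (d (f t) (g t) ^ p)

section DistMeasure

variable {U : Type*} {d : U → U → ℝ} {p : ℝ}

theorem weylD_eq_windowMean_rpow (d : U → U → ℝ) (p l : ℝ) (f g : ℝ → U) :
    weylD d p l f g = windowMean (distMeasure d p f g) l ^ (1 / p) := by
  simp only [weylD, windowMean, distMeasure, withDensity_apply _ measurableSet_Icc]

theorem weylDinf_eq_upperMean_rpow (d : U → U → ℝ) (hp : 0 < p) (f g : ℝ → U) :
    weylDinf d p f g = upperMean (distMeasure d p f g) ^ (1 / p) := by
  simp only [weylDinf, weylD_eq_windowMean_rpow]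
  exact ((ENNReal.orderIsoRpow (1 / p) (one_div_pos.2 hp)).limsup_apply).symm

theorem weylDinf_le_weylD (d : U → U → ℝ) (hp : 0 < p) {l : ℝ} (hl : 0 < l) (f g : ℝ → U) :
    weylDinf d p f g ≤ weylD d p l f g := by
  rw [weylD_eq_windowMean_rpow, weylDinf_eq_upperMean_rpow d hp]
  gcongr
  exact upperMean_le_windowMean _ hl

theorem APeriodsL_subset_APeriods (d : U → U → ℝ) (hp : 0 < p) {l : ℝ} (hl : 0 < l) (ε : ℝ)
    (f : ℝ → U) : APeriodsL d p l ε f ⊆ APeriods d p ε f :=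
  fun _ hτ => (weylDinf_le_weylD d hp hl f _).trans_lt hτ

theorem map_add_right_distMeasure (d : U → U → ℝ) (p : ℝ) (f g : ℝ → U) (τ : ℝ) :
    (distMeasure d p (fun t => f (t + τ)) fun t => g (t + τ)).map (· + τ) =
      distMeasure d p f g := by
  ext s hs
  rw [Measure.map_apply (measurable_add_const τ) hs, distMeasure, distMeasure,
    withDensity_apply', withDensity_apply']
  exact (measurePreserving_add_right volume τ).setLIntegral_comp_preimage_emb
    (measurableEmbedding_addRight τ) (fun t => ENNReal.ofReal (d (f t) (g t) ^ p)) s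

variable [TopologicalSpace U] {f g h : ℝ → U}

theorem aemeasurable_ofReal_dist_rpow (hd : IsContinuousPseudometric d) (p : ℝ)
    (hf : AEStronglyMeasurable f) (hg : AEStronglyMeasurable g) :
    AEMeasurable fun t => ENNReal.ofReal (d (f t) (g t) ^ p) :=
  ((hd.aestronglyMeasurable hf hg).aemeasurable.pow_const p).ennreal_ofReal

theorem smul_restrict_le_distMeasure (hd : IsContinuousPseudometric d) (hp : 0 ≤ p)
    (hf : AEStronglyMeasurable f) (hg : AEStronglyMeasurable g) {c : ℝ} (hc : 0 ≤ c) :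
    ENNReal.ofReal (c ^ p) • volume.restrict {t | c ≤ d (f t) (g t)} ≤ distMeasure d p f g := by
  refine Measure.le_iff.2 fun s hs => ?_
  have sublevel : {t | c ≤ d (f t) (g t)} ⊆
      {t | ENNReal.ofReal (c ^ p) ≤ ENNReal.ofReal (d (f t) (g t) ^ p)} :=
    fun t ht => ENNReal.ofReal_le_ofReal (Real.rpow_le_rpow hc ht hp)
  rw [Measure.smul_apply, smul_eq_mul, Measure.restrict_apply hs, Set.inter_comm,
    ← Measure.restrict_apply' hs, distMeasure, withDensity_apply _ hs]
  exact (by gcongr : _ ≤ _).trans <|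
    mul_meas_ge_le_lintegral₀ (aemeasurable_ofReal_dist_rpow hd p hf hg).restrict _

theorem distMeasure_le_smul_add (hd : IsContinuousPseudometric d) (hp : 0 ≤ p)
    (hf : AEStronglyMeasurable f) (hh : AEStronglyMeasurable h) (g : ℝ → U) :
    distMeasure d p f g ≤ (2 : ℝ≥0∞) ^ p • (distMeasure d p f h + distMeasure d p g h) := by
  have pointwise (t : ℝ) : ENNReal.ofReal (d (f t) (g t) ^ p) ≤ (2 : ℝ≥0∞) ^ p *
      (ENNReal.ofReal (d (f t) (h t) ^ p) + ENNReal.ofReal (d (g t) (h t) ^ p)) := by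
    simp only [← ENNReal.ofReal_rpow_of_nonneg (hd.nonneg _ _) hp]
    calc ENNReal.ofReal (d (f t) (g t)) ^ p
        ≤ (ENNReal.ofReal (d (f t) (h t)) + ENNReal.ofReal (d (g t) (h t))) ^ p := by
          rw [← ENNReal.ofReal_add (hd.nonneg _ _) (hd.nonneg _ _), hd.comm (g t)]
          gcongr
          exact hd.triangle _ _ _
      _ ≤ (2 : ℝ≥0∞) ^ p * (ENNReal.ofReal (d (f t) (h t)) ^ p +
            ENNReal.ofReal (d (g t) (h t)) ^ p) :=
          ENNReal.add_rpow_le_two_rpow_mul_rpow_add_rpow _ _ hp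
  refine Measure.le_iff.2 fun s hs => ?_
  simp only [distMeasure, Measure.smul_apply, Measure.add_apply, smul_eq_mul,
    withDensity_apply _ hs]
  rw [← lintegral_add_left' (aemeasurable_ofReal_dist_rpow hd p hf hh).restrict,
    ← lintegral_const_mul' _ _ (by finiteness)]
  exact lintegral_mono pointwise

theorem restrict_distMeasure_le_smul (hd : IsContinuousPseudometric d) (hp : 0 ≤ p) {c : ℝ}
    {T : Set ℝ} (hT : MeasurableSet T) (hle : ∀ t ∈ T, d (f t) (g t) ≤ c) :
    (distMeasure d p f g).restrict T ≤ ENNReal.ofReal (c ^ p) • volume := by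
  have density_le : ∀ᵐ t ∂volume.restrict T,
      ENNReal.ofReal (d (f t) (g t) ^ p) ≤ ENNReal.ofReal (c ^ p) := by
    filter_upwards [ae_restrict_mem hT] with t ht
    exact ENNReal.ofReal_le_ofReal (Real.rpow_le_rpow (hd.nonneg _ _) (hle t ht) hp)
  calc (distMeasure d p f g).restrict T
      ≤ (volume.restrict T).withDensity fun _ => ENNReal.ofReal (c ^ p) := by
        rw [distMeasure, restrict_withDensity hT]
        exact withDensity_mono density_le
    _ ≤ ENNReal.ofReal (c ^ p) • volume := by
        rw [withDensity_const]
        gcongr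
        exact Measure.restrict_le_self

theorem upperMean_distMeasure_le (hd : IsContinuousPseudometric d) (hp : 0 ≤ p)
    (hf : AEStronglyMeasurable f) (hh : AEStronglyMeasurable h) {c : ℝ} {T : Set ℝ}
    (hT : MeasurableSet T) (hle : ∀ t ∉ T, d (f t) (g t) ≤ c) :
    upperMean (distMeasure d p f g) ≤
      2 ^ p * (upperMean ((distMeasure d p f h).restrict T) +
        upperMean ((distMeasure d p g h).restrict T)) + ENNReal.ofReal (c ^ p) := by
  rw [← Measure.restrict_add_restrict_compl (μ := distMeasure d p f g) hT]
  refine (upperMean_add_le _ _).trans (add_le_add ?_ ?_)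
  · calc upperMean ((distMeasure d p f g).restrict T)
        ≤ upperMean (((2 : ℝ≥0∞) ^ p • (distMeasure d p f h + distMeasure d p g h)).restrict T) :=
          upperMean_mono (Measure.restrict_mono_measure (distMeasure_le_smul_add hd hp hf hh g) T)
      _ ≤ 2 ^ p * (upperMean ((distMeasure d p f h).restrict T) +
            upperMean ((distMeasure d p g h).restrict T)) := by
          rw [Measure.restrict_smul, Measure.restrict_add, upperMean_smul (by finiteness)]
          gcongr
          exact upperMean_add_le _ _
  · calc upperMean ((distMeasure d p f g).restrict Tᶜ)
        ≤ upperMean (ENNReal.ofReal (c ^ p) • volume) :=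
          upperMean_mono (restrict_distMeasure_le_smul hd hp hT.compl hle)
      _ = ENNReal.ofReal (c ^ p) := by
          rw [upperMean_smul ENNReal.ofReal_ne_top, upperMean_volume, mul_one]

end DistMeasure

theorem lt_ofReal_of_ofReal_rpow_mul_le {p c δ : ℝ} (hp : 0 < p) (hc : 0 ≤ c) (hδ : 0 ≤ δ)
    {m M : ℝ≥0∞} (hle : ENNReal.ofReal (c ^ p) * m ≤ M)
    (hlt : M ^ (1 / p) < ENNReal.ofReal (c * δ ^ (1 / p))) : m < ENNReal.ofReal δ := by
  refine lt_of_mul_lt_mul_left' (a := ENNReal.ofReal (c ^ p)) (hle.trans_lt ?_)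
  rwa [one_div, ENNReal.rpow_inv_lt_iff hp, ENNReal.ofReal_rpow_of_nonneg (by positivity) hp.le,
    Real.mul_rpow hc (by positivity), Real.rpow_inv_rpow hδ hp.ne',
    ENNReal.ofReal_mul (by positivity)] at hlt

section AlmostPeriods

variable {U : Type*} [TopologicalSpace U] {d : U → U → ℝ} {p : ℝ} {f g : ℝ → U}

theorem windowMean_restrict_lt_of_weylD_lt (hd : IsContinuousPseudometric d) (hp : 0 < p)
    (hf : AEStronglyMeasurable f) (hg : AEStronglyMeasurable g) {c δ l : ℝ} (hc : 0 ≤ c)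
    (hδ : 0 ≤ δ) (hlt : weylD d p l f g < ENNReal.ofReal (c * δ ^ (1 / p))) :
    windowMean (volume.restrict {t | c ≤ d (f t) (g t)}) l < ENNReal.ofReal δ := by
  rw [weylD_eq_windowMean_rpow] at hlt
  refine lt_ofReal_of_ofReal_rpow_mul_le hp hc hδ ?_ hlt
  rw [← windowMean_smul]
  exact windowMean_mono (smul_restrict_le_distMeasure hd hp.le hf hg hc) l

theorem kappaW_lt_of_weylDinf_lt (hd : IsContinuousPseudometric d) (hp : 0 < p)
    (hf : AEStronglyMeasurable f) (hg : AEStronglyMeasurable g) {c δ : ℝ} (hc : 0 ≤ c)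
    (hδ : 0 ≤ δ) (hlt : weylDinf d p f g < ENNReal.ofReal (c * δ ^ (1 / p))) :
    kappaW {t | c ≤ d (f t) (g t)} < ENNReal.ofReal δ := by
  rw [weylDinf_eq_upperMean_rpow d hp] at hlt
  refine lt_ofReal_of_ofReal_rpow_mul_le hp hc hδ ?_ hlt
  rw [kappaW_eq_upperMean, ← upperMean_smul ENNReal.ofReal_ne_top]
  exact upperMean_mono (smul_restrict_le_distMeasure hd hp.le hf hg hc)

theorem setOf_le_dInfDist_range_subset (hd : IsContinuousPseudometric d) {ε : ℝ} (hε : 0 < ε)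
    (f s : ℝ → U) (τ : ℝ) :
    {t | ENNReal.ofReal ε ≤ dInfDist d (f t) (Set.range s)} ⊆
      {t | ε / 2 ≤ d (f t) (f (t + τ))} ∪ (· + τ) ⁻¹' {u | ε / 2 ≤ d (f u) (s u)} := by
  intro t ht
  have far : ε ≤ d (f t) (s (t + τ)) := (ofReal_le_dInfDist_iff hε).1 ht _ (Set.mem_range_self _)
  by_contra! near
  simp only [Set.mem_union, Set.mem_preimage, Set.mem_ofPred_eq, not_or, not_le] at near
  linarith [hd.triangle (f t) (f (t + τ)) (s (t + τ))]

theorem volume_Icc_inter_preimage_add_right_le (B : Set ℝ) {a l ξ τ : ℝ}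
    (hτ : τ ∈ Set.Icc (-ξ) (-ξ + a)) :
    volume (Set.Icc ξ (ξ + l) ∩ (· + τ) ⁻¹' B) ≤ volume.restrict (Set.Icc 0 (a + l)) B := by
  rw [Measure.restrict_apply' measurableSet_Icc,
    ← measure_preimage_add_right volume τ (B ∩ Set.Icc 0 (a + l))]
  refine measure_mono fun t ht => ⟨ht.2, ?_, ?_⟩
  · linarith [ht.1.1, hτ.1]
  · linarith [ht.1.2, hτ.2]

theorem average_setOf_le_dInfDist_range_le (hd : IsContinuousPseudometric d) {ε : ℝ} (hε : 0 < ε)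
    (f s : ℝ → U) {a l ξ τ : ℝ} (hτ : τ ∈ Set.Icc (-ξ) (-ξ + a)) :
    ENNReal.ofReal (1 / l) * volume.restrict
        {t | ENNReal.ofReal ε ≤ dInfDist d (f t) (Set.range s)} (Set.Icc ξ (ξ + l)) ≤
      windowMean (volume.restrict {t | ε / 2 ≤ d (f t) (f (t + τ))}) l +
        ENNReal.ofReal (1 / l) *
          volume.restrict (Set.Icc 0 (a + l)) {u | ε / 2 ≤ d (f u) (s u)} := by
  set V := {t | ε / 2 ≤ d (f t) (f (t + τ))}
  set B := {u | ε / 2 ≤ d (f u) (s u)}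
  calc ENNReal.ofReal (1 / l) * volume.restrict
        {t | ENNReal.ofReal ε ≤ dInfDist d (f t) (Set.range s)} (Set.Icc ξ (ξ + l))
      ≤ ENNReal.ofReal (1 / l) * volume.restrict V (Set.Icc ξ (ξ + l)) +
          ENNReal.ofReal (1 / l) * volume (Set.Icc ξ (ξ + l) ∩ (· + τ) ⁻¹' B) := by
        rw [← mul_add, Measure.restrict_apply measurableSet_Icc,
          Measure.restrict_apply measurableSet_Icc]
        gcongr
        refine (measure_mono ?_).trans (measure_union_le _ _)
        rw [← Set.inter_union_distrib_left]
        exact Set.inter_subset_inter_right _ (setOf_le_dInfDist_range_subset hd hε f s τ)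
    _ ≤ windowMean (volume.restrict V) l +
          ENNReal.ofReal (1 / l) * volume.restrict (Set.Icc 0 (a + l)) B := by
        gcongr ?_ + _ * ?_
        · exact le_windowMean _ l ξ
        · exact volume_Icc_inter_preimage_add_right_le B hτ

/- A simple function approximates `f` in measure on the single window `[0, a + l]`; an almost period
in `[-ξ, -ξ + a]` carries `[ξ, ξ + l]` into it, so its finitely many values serve for every `ξ`. -/
theorem exists_isCompact_kappaW_lt (hd : IsContinuousPseudometric d) (hp : 0 < p)
    (hf : AEStronglyMeasurable f) (hper : ∀ ε > 0, ∃ l > 0, RelDense (APeriodsL d p l ε f))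
    {ε δ : ℝ} (hε : 0 < ε) (hδ : 0 < δ) :
    ∃ K : Set U, IsCompact K ∧
      kappaW {t | ENNReal.ofReal ε ≤ dInfDist d (f t) K} < ENNReal.ofReal δ := by
  obtain ⟨l, hl, a, -, ha⟩ := hper (ε / 2 * (δ / 4) ^ (1 / p)) (by positivity)
  obtain ⟨s, hs⟩ := hd.exists_simpleFunc_measure_lt
    (hf.restrict (s := Set.Icc 0 (a + l))) (half_pos hε)
    (ENNReal.ofReal_pos.2 (by positivity : 0 < l * (δ / 4)))
  refine ⟨Set.range s, s.finite_range.isCompact, ?_⟩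
  set E := {t | ENNReal.ofReal ε ≤ dInfDist d (f t) (Set.range s)}
  have window_le (ξ : ℝ) :
      ENNReal.ofReal (1 / l) * volume.restrict E (Set.Icc ξ (ξ + l)) ≤
        ENNReal.ofReal (δ / 4) + ENNReal.ofReal (δ / 4) := by
    obtain ⟨τ, hτξ, hτ⟩ := ha (-ξ)
    have almost_period_lt :
        windowMean (volume.restrict {t | ε / 2 ≤ d (f t) (f (t + τ))}) l < ENNReal.ofReal (δ / 4) :=
      windowMean_restrict_lt_of_weylD_lt hd hp hf
        (hf.comp_quasiMeasurePreserving (quasiMeasurePreserving_add_right volume τ))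
        (by positivity) (by positivity) hτ
    refine (average_setOf_le_dInfDist_range_le hd hε f s hτξ).trans
      (add_le_add almost_period_lt.le ?_)
    calc ENNReal.ofReal (1 / l) * volume.restrict (Set.Icc 0 (a + l)) {u | ε / 2 ≤ d (f u) (s u)}
        ≤ ENNReal.ofReal (1 / l) * ENNReal.ofReal (l * (δ / 4)) := by gcongr
      _ = ENNReal.ofReal (δ / 4) := by
          rw [← ENNReal.ofReal_mul (by positivity), ← mul_assoc, one_div_mul_cancel hl.ne', one_mul]
  calc kappaW E ≤ windowMean (volume.restrict E) l := by
        rw [kappaW_eq_upperMean]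
        exact upperMean_le_windowMean _ hl
    _ ≤ ENNReal.ofReal (δ / 4) + ENNReal.ofReal (δ / 4) := iSup_le window_le
    _ < ENNReal.ofReal δ := by
        rw [← ENNReal.ofReal_add (by positivity) (by positivity), ENNReal.ofReal_lt_ofReal_iff hδ]
        linarith

theorem MemWp.memWpTilde {x₀ : U} (hd : IsContinuousPseudometric d) (hp : 0 < p)
    (hf : MemWp d p x₀ f) : MemWpTilde d p x₀ f := by
  refine ⟨hf.1, fun ε hε => ?_, fun ε hε δ hδ => exists_isCompact_kappaW_lt hd hp hf.1.1 hf.2 hε hδ⟩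
  obtain ⟨l, hl, hdense⟩ := hf.2 ε hε
  exact hdense.mono (APeriodsL_subset_APeriods d hp hl ε f)

theorem MemMpStar.exists_upperMean_restrict_lt {x₀ : U} (hf : MemMpStar d p x₀ f) {ε : ℝ}
    (hε : 0 < ε) :
    ∃ δ > 0, ∀ T : Set ℝ, MeasurableSet T → kappaW T < ENNReal.ofReal δ →
      upperMean ((distMeasure d p f fun _ => x₀).restrict T) < ENNReal.ofReal ε := by
  simpa only [upperMean, windowMean, Measure.restrict_apply measurableSet_Icc, distMeasure,
    withDensity_apply'] using hf.2 ε hε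

theorem MemMpStar.exists_weylDinf_lt {x₀ : U} (hd : IsContinuousPseudometric d) (hp : 0 < p)
    (hf : MemMpStar d p x₀ f) {ε : ℝ} (hε : 0 < ε) :
    ∃ c > 0, ∃ δ > 0, ∀ τ, kappaW {t | c ≤ d (f t) (f (t + τ))} < ENNReal.ofReal δ →
      weylDinf d p f (fun t => f (t + τ)) < ENNReal.ofReal ε := by
  set η := ε ^ p / (8 * 2 ^ p) with hη
  set c := (ε ^ p / 4) ^ p⁻¹ with hc
  obtain ⟨δ, hδ, hT⟩ := hf.exists_upperMean_restrict_lt (ε := η) (by positivity)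
  refine ⟨c, by positivity, δ, hδ, fun τ hτ => ?_⟩
  set fτ := fun t => f (t + τ)
  set T := toMeasurable volume {t | c ≤ d (f t) (fτ t)}
  have hTm : MeasurableSet T := measurableSet_toMeasurable _ _
  have hTκ : kappaW T < ENNReal.ofReal δ := by rwa [kappaW_toMeasurable]
  have hfT : upperMean ((distMeasure d p f fun _ => x₀).restrict T) < ENNReal.ofReal η :=
    hT T hTm hTκ
  have hfτT : upperMean ((distMeasure d p fτ fun _ => x₀).restrict T) < ENNReal.ofReal η := by
    rw [← upperMean_restrict_map_add_right _ T τ, map_add_right_distMeasure d p f (fun _ => x₀) τ]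
    exact hT _ (hTm.preimage (measurable_sub_const τ)) (by rwa [kappaW_preimage_sub_right])
  have close_off_T : ∀ t ∉ T, d (f t) (fτ t) ≤ c := fun t ht =>
    (not_le.1 fun hle => ht (subset_toMeasurable _ _ hle)).le
  rw [weylDinf_eq_upperMean_rpow d hp, one_div, ENNReal.rpow_inv_lt_iff hp,
    ENNReal.ofReal_rpow_of_pos hε]
  calc upperMean (distMeasure d p f fτ)
      ≤ 2 ^ p * (ENNReal.ofReal η + ENNReal.ofReal η) + ENNReal.ofReal (c ^ p) :=
        (upperMean_distMeasure_le hd hp.le hf.1.1 aestronglyMeasurable_const hTm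
          close_off_T).trans (by gcongr)
    _ = ENNReal.ofReal (2 ^ p * (η + η) + c ^ p) := by
        rw [← ENNReal.ofReal_add (by positivity) (by positivity), ← ENNReal.ofReal_ofNat,
          ENNReal.ofReal_rpow_of_pos two_pos, ← ENNReal.ofReal_mul (by positivity),
          ← ENNReal.ofReal_add (by positivity) (by positivity)]
    _ < ENNReal.ofReal (ε ^ p) := by
        rw [ENNReal.ofReal_lt_ofReal_iff (by positivity), hc,
          Real.rpow_inv_rpow (by positivity) hp.ne']
        have : 2 ^ p * (η + η) = ε ^ p / 4 := by rw [hη]; field_simp; norm_num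
        linarith [Real.rpow_pos_of_pos hε p]

end AlmostPeriods

section Truncation

variable {U : Type*} [PseudoMetricSpace U] {p : ℝ} {x₀ : U} {f : ℝ → U}

theorem min_one_le_bdist {ε : ℝ} {x y : U} (h : ε ≤ dist x y) : min 1 ε ≤ bdist x y :=
  min_le_min_left 1 h

theorem MemMpStar.exists_APeriods_bdist_subset (hp : 0 < p) (hf : MemMpStar dist p x₀ f) {ε : ℝ}
    (hε : 0 < ε) : ∃ ε' > 0, APeriods bdist 1 ε' f ⊆ APeriods dist p ε f := by
  obtain ⟨c, hc, δ, hδ, hlt⟩ := hf.exists_weylDinf_lt isContinuousPseudometric_dist hp hε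
  have hc' : 0 < min 1 c := lt_min one_pos hc
  refine ⟨min 1 c * δ ^ (1 / 1 : ℝ), by positivity, fun τ hτ => hlt τ ?_⟩
  refine (kappaW_mono fun t => min_one_le_bdist).trans_lt <|
    kappaW_lt_of_weylDinf_lt isContinuousPseudometric_bdist one_pos hf.1.1
      (hf.1.1.comp_quasiMeasurePreserving (quasiMeasurePreserving_add_right volume τ))
      hc'.le hδ.le hτ

theorem MemWpTilde.of_bdist (hp : 0 < p) (hf : MemWpTilde bdist 1 x₀ f)
    (hf' : MemMpStar dist p x₀ f) : MemWpTilde dist p x₀ f := by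
  refine ⟨hf'.1, fun ε hε => ?_, fun ε hε δ hδ => ?_⟩
  · obtain ⟨ε', hε', hsub⟩ := hf'.exists_APeriods_bdist_subset hp hε
    exact (hf.2.1 ε' hε').mono hsub
  · have hε' : 0 < min 1 ε := lt_min one_pos hε
    obtain ⟨K, hK, hlt⟩ := hf.2.2 (min 1 ε) hε' δ hδ
    refine ⟨K, hK, (kappaW_mono fun t ht => ?_).trans_lt hlt⟩
    exact (ofReal_le_dInfDist_iff hε').2 fun y hy =>
      min_one_le_bdist ((ofReal_le_dInfDist_iff hε).1 ht y hy)

end Truncation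

theorem weyl_tilde_inclusions_general {U : Type*} [PseudoMetricSpace U] (x₀ : U) {p : ℝ}
    (hp : 0 < p) (f : ℝ → U) :
    (MemWp bdist 1 x₀ f → MemWpTilde bdist 1 x₀ f) ∧
    (MemWpTilde bdist 1 x₀ f ∧ MemMpStar dist p x₀ f → MemWpTilde dist p x₀ f) ∧
    (MemWp dist p x₀ f → MemWpTilde dist p x₀ f) :=
  ⟨fun hf => hf.memWpTilde isContinuousPseudometric_bdist one_pos,
    fun hf => hf.1.of_bdist hp hf.2,
    fun hf => hf.memWpTilde isContinuousPseudometric_dist hp⟩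

/-- **Inclusions `W(ℝ,U) ∩ M*_p(ℝ,U) ⊆ W̃(ℝ,U) ∩ M*_p(ℝ,U) ⊆ W̃_p(ℝ,U)`; in
particular `W_p(ℝ,U) ⊆ W̃_p(ℝ,U)`.** -/
theorem weyl_tilde_inclusions {U : Type*} [MetricSpace U] [CompleteSpace U] (x₀ : U)
    (p : ℝ) (hp : 1 ≤ p) (f : ℝ → U) :
    (MemWp bdist 1 x₀ f ∧ MemMpStar dist p x₀ f →
      MemWpTilde bdist 1 x₀ f ∧ MemMpStar dist p x₀ f) ∧
    (MemWpTilde bdist 1 x₀ f ∧ MemMpStar dist p x₀ f → MemWpTilde dist p x₀ f) ∧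
    (MemWp dist p x₀ f → MemWpTilde dist p x₀ f) := by
  obtain ⟨h₁, h₂, h₃⟩ := weyl_tilde_inclusions_general x₀ (one_pos.trans_le hp) f
  exact ⟨fun hf => ⟨h₁ hf.1, hf.2⟩, h₂, h₃⟩
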